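/- Let T be an L-theory, k ≥ 1, and φ(x,y) an L-formula in two k-tuples of free variables. Suppose some model of T contains an L-indiscernible sequence (b_i)_{i<ω} of k-tuples such that the relation u < v defined by φ(u,v) is transitive and irreflexive and b_i < b_j for all i < j < ω. Then there are a model M₀ of T, k-tuples (a_i)_{i<ω} in M₀ with a_i < a_j (in the sense of φ) for all i < j < ω, and an L-automorphism σ₀ of M₀ such that σ₀(a_i) = a_{i+1} (applied componentwise) for every i < ω. -/

import Mathlib

universe u v w

open FirstOrder Language Structure

/-- A sequence `b` of `k`-tuples in an `L`-structure `M` is `L`-indiscernible if any two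
strictly increasing finite subsequences of the same length satisfy the same `L`-formulas
(with the tuples concatenated, i.e. in the variables `Fin n × Fin k`). -/
def IsIndiscernibleSeq (L : FirstOrder.Language.{u, v}) (M : Type w) [L.Structure M]
    (k : ℕ) (b : ℕ → Fin k → M) : Prop :=
  ∀ (n : ℕ) (i j : Fin n → ℕ), StrictMono i → StrictMono j →
    ∀ ψ : L.Formula (Fin n × Fin k),
      ψ.Realize (fun p => b (i p.1) p.2) ↔ ψ.Realize (fun p => b (j p.1) p.2)

/-!
Iterating a non-principal ultrafilter on `ℕ` along a linear order `ι` gives an ultrafilter on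
`ι → ℕ` that concentrates on increasing sequences; it is invariant under the order automorphisms
of `ι` as far as sets depending on finitely many coordinates are concerned. No non-trivial
self-map preserves an ultrafilter on all sets, so instead of the ultrapower of `M` we take its
elementary substructure of classes of functions depending on finitely many coordinates. Order
automorphisms of `ι` act on it, and the class of `x ↦ b (x i)` is the `i`-th term of the required
sequence. The theorem is the case of the translation of `ℤ`.
-/

universe t t'

open Filter Function

section DependsOnFinitely

variable {ι κ α γ δ : Type*}

/-- A function of a family `x : ι → α` depends on only finitely many of the coordinates of `x`.
For a predicate this says that it defines a cylinder set with a finite base. -/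
def DependsOnFinitely (F : (ι → α) → γ) : Prop :=
  ∃ s : Set ι, s.Finite ∧ DependsOn F s

namespace DependsOnFinitely

theorem const (c : γ) : DependsOnFinitely fun _ : ι → α ↦ c :=
  ⟨∅, Set.finite_empty, dependsOn_const c⟩

theorem apply (i : ι) : DependsOnFinitely fun x : ι → α ↦ x i :=
  ⟨{i}, Set.finite_singleton i, fun _ _ hxy ↦ hxy i rfl⟩

theorem map {F : (ι → α) → γ} (hF : DependsOnFinitely F) (g : γ → δ) :
    DependsOnFinitely fun x ↦ g (F x) := by
  obtain ⟨s, hs, hFs⟩ := hF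
  exact ⟨s, hs, fun _ _ hxy ↦ congrArg g (hFs hxy)⟩

theorem pi {η : Type*} [Finite η] {F : η → (ι → α) → γ} (hF : ∀ j, DependsOnFinitely (F j)) :
    DependsOnFinitely fun x j ↦ F j x := by
  choose s hs hFs using hF
  exact ⟨⋃ j, s j, Set.finite_iUnion hs, fun _ _ hxy ↦ funext fun j ↦
    (hFs j).mono (Set.subset_iUnion s j) hxy⟩

theorem reindex {F : (ι → α) → γ} (hF : DependsOnFinitely F) (f : ι → κ) :
    DependsOnFinitely fun x : κ → α ↦ F (x ∘ f) := by
  obtain ⟨s, hs, hFs⟩ := hF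
  exact ⟨f '' s, hs.image f, fun _ _ hxy ↦ hFs fun i hi ↦ hxy (f i) (Set.mem_image_of_mem f hi)⟩

end DependsOnFinitely

end DependsOnFinitely

section TensorList

variable {ι κ α : Type*} [DecidableEq ι] [DecidableEq κ] [Nonempty α] (U : Ultrafilter α)

/-- The product ultrafilter `U ⊗ ⋯ ⊗ U` along a list `l` of indices, as an ultrafilter on
`ι → α`. The head of `l` is the outermost quantifier, and the coordinates outside `l` are frozen
at an arbitrary value. -/
noncomputable def tensorList : List ι → Ultrafilter (ι → α)
  | [] => pure fun _ ↦ Classical.arbitrary α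
  | i :: l => U.bind fun p ↦ (tensorList l).map fun x ↦ update x i p

theorem eventually_tensorList_cons (i : ι) (l : List ι) (P : (ι → α) → Prop) :
    (∀ᶠ x in tensorList U (i :: l), P x) ↔
      ∀ᶠ p in U, ∀ᶠ x in tensorList U l, P (update x i p) :=
  Iff.rfl

theorem eventually_tensorList_of_sublist {l l' : List ι} (hll' : l.Sublist l') (hl' : l'.Nodup)
    {P : (ι → α) → Prop} (hP : DependsOn P {i | i ∈ l}) :
    (∀ᶠ x in tensorList U l', P x) ↔ ∀ᶠ x in tensorList U l, P x := by
  induction hll' generalizing P with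
  | slnil => rfl
  | @cons l l' i hll' ih =>
    obtain ⟨hi, hl'⟩ := List.nodup_cons.1 hl'
    have update_irrelevant (x : ι → α) (p : α) : P (update x i p) = P x :=
      hP fun j hj ↦ update_of_ne (by rintro rfl; exact hi (hll'.subset hj)) p x
    simp only [eventually_tensorList_cons, update_irrelevant, eventually_const, ih hl' hP]
  | @cons_cons l l' i _ ih =>
    have depends_update (p : α) : DependsOn (fun x ↦ P (update x i p)) {j | j ∈ l} := by
      refine fun x y hxy ↦ hP fun j hj ↦ ?_
      rcases eq_or_ne j i with rfl | hji
      · simp only [update_self]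
      · simpa only [update_of_ne hji] using hxy j (List.mem_of_ne_of_mem hji hj)
    simp only [eventually_tensorList_cons, ih hl'.of_cons (depends_update _)]

theorem eventually_tensorList_map {f : ι → κ} (hf : Injective f) (l : List ι)
    (P : (ι → α) → Prop) :
    (∀ᶠ x in tensorList U (l.map f), P (x ∘ f)) ↔ ∀ᶠ x in tensorList U l, P x := by
  induction l generalizing P with
  | nil => rfl
  | cons i l ih =>
    simp only [List.map_cons, eventually_tensorList_cons, update_comp_eq_of_injective _ hf]
    exact eventually_congr (.of_forall fun p ↦ ih fun x ↦ P (update x i p))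

end TensorList

section TensorPower

variable {ι κ α : Type*} [LinearOrder ι] [LinearOrder κ] [Nonempty α] (U : Ultrafilter α)

variable (ι) in
/-- The `ι`-fold tensor power of `U` along a linear order `ι`: an ultrafilter on `ι → α` which, on
sets depending on finitely many coordinates `i₁ < ⋯ < iₙ`, is the iterated product
`U ⊗ ⋯ ⊗ U` in these coordinates. Its values on other sets are an arbitrary choice. -/
noncomputable def tensorPower : Ultrafilter (ι → α) :=
  (Ultrafilter.of (atTop : Filter (Finset ι))).bind fun s ↦ tensorList U s.sort

theorem sort_sublist_sort {s t : Finset ι} (hst : s ⊆ t) : s.sort.Sublist t.sort := by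
  have sort_subset : s.sort ⊆ t.sort := fun i hi ↦
    (Finset.mem_sort _).2 (hst ((Finset.mem_sort _).1 hi))
  exact List.sublist_of_subperm_of_sortedLE (List.subperm_of_subset (s.sort_nodup _) sort_subset)
    s.sortedLT_sort.sortedLE t.sortedLT_sort.sortedLE

theorem eventually_tensorPower_of_dependsOn {s : Finset ι} {P : (ι → α) → Prop}
    (hP : DependsOn P s) :
    (∀ᶠ x in tensorPower ι U, P x) ↔ ∀ᶠ x in tensorList U s.sort, P x := by
  have stabilizes : ∀ᶠ t in (Ultrafilter.of (atTop : Filter (Finset ι)) : Filter (Finset ι)),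
      ((∀ᶠ x in tensorList U t.sort, P x) ↔ ∀ᶠ x in tensorList U s.sort, P x) := by
    filter_upwards [Ultrafilter.of_le _ (eventually_ge_atTop s)] with t hst
    exact eventually_tensorList_of_sublist U (sort_sublist_sort hst) (t.sort_nodup _)
      (hP.mono fun i hi ↦ (Finset.mem_sort _).2 hi)
  exact (eventually_congr stabilizes).trans eventually_const

theorem eventually_tensorPower_reindex (f : ι ↪o κ) {P : (ι → α) → Prop}
    (hP : DependsOnFinitely P) :
    (∀ᶠ x in tensorPower κ U, P (x ∘ f)) ↔ ∀ᶠ x in tensorPower ι U, P x := by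
  obtain ⟨s, hs, hPs⟩ := hP
  lift s to Finset ι using hs
  have depends_map : DependsOn (fun x : κ → α ↦ P (x ∘ f)) (s.map f.toEmbedding) :=
    fun x y hxy ↦ hPs fun i hi ↦ hxy (f i) (Finset.mem_map_of_mem _ hi)
  have sort_map : (s.map f.toEmbedding).sort = s.sort.map f :=
    (StrictMonoOn.map_finsetSort f.toEmbedding s (f.strictMono.strictMonoOn _)).symm
  rw [eventually_tensorPower_of_dependsOn U depends_map, sort_map,
    eventually_tensorList_map U f.injective, eventually_tensorPower_of_dependsOn U hPs]

theorem eventually_tensorPower_lt [Preorder α] [NoMaxOrder α] (hU : (U : Filter α) ≤ atTop)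
    {i j : ι} (hij : i < j) : ∀ᶠ x in (tensorPower ι U : Filter (ι → α)), x i < x j := by
  have depends_pair : DependsOn (fun x : ι → α ↦ x i < x j) ({i, j} : Finset ι) :=
    fun x y hxy ↦ by simp only [hxy i (by simp), hxy j (by simp)]
  have sort_pair : ({i, j} : Finset ι).sort = [i, j] := by
    rw [Finset.sort_insert] <;> simp [hij.le, hij.ne]
  rw [eventually_tensorPower_of_dependsOn U depends_pair, sort_pair]
  simp only [eventually_tensorList_cons, update_self, update_of_ne hij.ne', eventually_const]
  exact .of_forall fun p ↦ hU (eventually_gt_atTop p)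

end TensorPower

section ModelTheory

variable {L : FirstOrder.Language.{u, v}}

theorem exists_equiv_of_realize_iff {A S T : Type*} [L.Structure S] [L.Structure T]
    {p : A → S} {q : A → T} (hp : Surjective p) (hq : Surjective q)
    (h : ∀ (n : ℕ) (ψ : L.Formula (Fin n)) (c : Fin n → A),
      ψ.Realize (p ∘ c) ↔ ψ.Realize (q ∘ c)) :
    ∃ σ : S ≃[L] T, ∀ c, σ (p c) = q c := by
  have eq_iff (c d : A) : p c = p d ↔ q c = q d := by
    simpa [Formula.realize_equal] using
      h 2 ((Term.var 0).equal (Term.var 1)) ![c, d]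
  let σ : S ≃ T := .ofBijective (fun s ↦ q (surjInv hp s))
    ⟨fun s t hst ↦ by simpa only [surjInv_eq] using (eq_iff _ _).2 hst,
      fun t ↦ (hq t).imp' p fun c hc ↦ ((eq_iff _ _).1 (surjInv_eq hp _)).trans hc⟩
  have σ_p (c : A) : σ (p c) = q c := (eq_iff _ _).1 (surjInv_eq hp _)
  have σ_comp_p {n : ℕ} (c : Fin n → A) : σ ∘ p ∘ c = q ∘ c := funext fun i ↦ σ_p (c i)
  refine ⟨⟨σ, fun {n} f x ↦ ?_, fun {n} r x ↦ ?_⟩, σ_p⟩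
  all_goals obtain ⟨c, rfl⟩ := hp.comp_left x
  · obtain ⟨d, hd⟩ := hp (funMap f (p ∘ c))
    have graph_iff := h (n + 1) (Formula.graph f) (Fin.cons d c)
    simp only [Fin.comp_cons, Formula.realize_graph] at graph_iff
    change σ (funMap f (p ∘ c)) = funMap f (σ ∘ p ∘ c)
    rw [σ_comp_p, ← hd, σ_p, graph_iff.1 hd.symm]
  · change RelMap r (σ ∘ p ∘ c) ↔ RelMap r (p ∘ c)
    rw [σ_comp_p]
    simpa only [Formula.realize_rel, Term.realize_var, comp_def] using
      (h n (r.formula Term.var) c).symm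

variable {M : Type w} [L.Structure M]

section Ultrapower

variable {X : Type*} (W : Ultrafilter X)

variable (M) in
/-- The ultrapower of `M` modulo `W`, as the constant case of Mathlib's ultraproduct. -/
abbrev Ultrapower : Type _ := (W : Filter X).Product fun _ ↦ M

theorem Ultrapower.realize_snoc_cast [Nonempty M] {n : ℕ}
    (ψ : L.BoundedFormula Empty (n + 1)) (F : Fin n → X → M) (G : X → M) :
    ψ.Realize default (Fin.snoc (fun i ↦ (F i : Ultrapower M W)) G : _ → Ultrapower M W) ↔
      ∀ᶠ x in W, ψ.Realize default (Fin.snoc (fun i ↦ F i x) (G x) : _ → M) := by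
  have snoc_cast : (Fin.snoc (fun i ↦ (F i : Ultrapower M W)) G : _ → Ultrapower M W) =
      fun i ↦ ((Fin.snoc F G : _ → X → M) i : Ultrapower M W) :=
    (Fin.comp_snoc _ F G).symm
  have snoc_apply (x : X) :
      (fun i ↦ (Fin.snoc F G : _ → X → M) i x) = Fin.snoc (fun i ↦ F i x) (G x) :=
    Fin.comp_snoc (fun f : X → M ↦ f x) F G
  exact (iff_of_eq (congrArg₂ ψ.Realize (Subsingleton.elim _ _) snoc_cast)).trans <|
    (Ultraproduct.boundedFormula_realize_cast ψ (fun i ↦ i.elim) (Fin.snoc F G)).trans <|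
    eventually_congr (.of_forall fun x ↦
      iff_of_eq (congrArg₂ ψ.Realize (Subsingleton.elim _ _) (snoc_apply x)))

end Ultrapower

variable {ι α : Type*} (W : Ultrafilter (ι → α))

variable (L M) in
/-- The limit ultrapower of `M`: the substructure of the ultrapower of `M` modulo `W` formed by
the classes of functions `(ι → α) → M` that depend on finitely many coordinates. -/
def limitUltrapower : L.Substructure (Ultrapower M W) where
  carrier := {q | ∃ F : (ι → α) → M, DependsOnFinitely F ∧ F = q}
  fun_mem f x hx := by
    choose F hF hFx using hx
    obtain rfl := funext hFx
    exact ⟨_, (DependsOnFinitely.pi hF).map (funMap f), (Ultraproduct.funMap_cast f F).symm⟩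

namespace limitUltrapower

/-- The class in the limit ultrapower of a function depending on finitely many coordinates. -/
def mk (F : {F : (ι → α) → M // DependsOnFinitely F}) : limitUltrapower L M W :=
  ⟨F.1, F.1, F.2, rfl⟩

theorem mk_surjective : Surjective (mk (L := L) (M := M) W) := by
  rintro ⟨_, F, hF, rfl⟩
  exact ⟨⟨F, hF⟩, rfl⟩

variable [Nonempty M]

theorem isElementary : (limitUltrapower L M W).IsElementary := by
  refine Substructure.isElementary_of_exists _ fun n ψ x a hψ ↦ ?_
  choose F hF using fun i ↦ mk_surjective W (x i)
  obtain rfl := funext hF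
  obtain ⟨G, rfl⟩ := Quotient.exists_rep a
  let witness (v : Fin n → M) : M := Classical.epsilon fun m ↦ ψ.Realize default (Fin.snoc v m)
  let H : {H : (ι → α) → M // DependsOnFinitely H} :=
    ⟨fun x ↦ witness fun i ↦ (F i).1 x, (DependsOnFinitely.pi fun i ↦ (F i).2).map witness⟩
  refine ⟨mk W H, (Ultrapower.realize_snoc_cast W ψ (fun i ↦ (F i).1) H.1).2 ?_⟩
  filter_upwards [(Ultrapower.realize_snoc_cast W ψ (fun i ↦ (F i).1) G).1 hψ] with x hx
  exact Classical.epsilon_spec (p := fun m ↦ ψ.Realize default (Fin.snoc _ m)) ⟨G x, hx⟩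

theorem realize_mk {η : Type*} (ψ : L.Formula η)
    (F : η → {F : (ι → α) → M // DependsOnFinitely F}) :
    ψ.Realize (fun j ↦ mk (L := L) W (F j)) ↔ ∀ᶠ x in W, ψ.Realize fun j ↦ (F j).1 x :=
  ((⟨_, isElementary W⟩ : L.ElementarySubstructure _).subtype.map_formula ψ _).symm.trans
    (Ultraproduct.realize_formula_cast ψ fun j ↦ (F j).1)

theorem realize_sumElim_mk {η θ : Type*} (ψ : L.Formula (η ⊕ θ))
    (F : η → {F : (ι → α) → M // DependsOnFinitely F})
    (G : θ → {F : (ι → α) → M // DependsOnFinitely F}) :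
    ψ.Realize (Sum.elim (fun j ↦ mk (L := L) W (F j)) fun j ↦ mk W (G j)) ↔
      ∀ᶠ x in W, ψ.Realize (Sum.elim (fun j ↦ (F j).1 x) fun j ↦ (G j).1 x) := by
  have elim_mk : (Sum.elim (fun j ↦ mk (L := L) W (F j)) fun j ↦ mk W (G j)) =
      fun s ↦ mk W (Sum.elim F G s) :=
    (Sum.comp_elim (mk W) F G).symm
  have elim_apply (x : ι → α) : (fun s ↦ (Sum.elim F G s).1 x) =
      Sum.elim (fun j ↦ (F j).1 x) fun j ↦ (G j).1 x :=
    Sum.comp_elim (fun F : {F : (ι → α) → M // DependsOnFinitely F} ↦ F.1 x) F G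
  simp only [elim_mk, realize_mk, elim_apply]

variable (L M) in
/-- The diagonal embedding of `M` into its limit ultrapower. -/
def diagonal : M ↪ₑ[L] limitUltrapower L M W where
  toFun m := mk W ⟨fun _ ↦ m, .const m⟩
  map_formula' _ ψ v :=
    (realize_mk W ψ fun j ↦ ⟨fun _ ↦ v j, .const (v j)⟩).trans
      (eventually_const (p := ψ.Realize v))

theorem exists_equiv_reindex (e : ι ≃ ι)
    (hW : ∀ P : (ι → α) → Prop, DependsOnFinitely P →
      ((∀ᶠ x in W, P (x ∘ e)) ↔ ∀ᶠ x in W, P x)) :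
    ∃ σ : limitUltrapower L M W ≃[L] limitUltrapower L M W,
      ∀ F, σ (mk W F) = mk W ⟨fun x ↦ F.1 (x ∘ e), F.2.reindex e⟩ := by
  refine exists_equiv_of_realize_iff (mk_surjective W) ?_ fun n ψ F ↦ ?_
  · refine (mk_surjective W).comp fun F ↦ ⟨⟨fun x ↦ F.1 (x ∘ e.symm), F.2.reindex e.symm⟩, ?_⟩
    simp only [comp_assoc, Equiv.self_comp_symm, comp_id]
  · exact (realize_mk W ψ F).trans <|
      (hW _ ((DependsOnFinitely.pi fun j ↦ (F j).2).map ψ.Realize)).symm.trans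
        (realize_mk W ψ fun j ↦ ⟨fun x ↦ (F j).1 (x ∘ e), (F j).2.reindex e⟩).symm

end limitUltrapower

theorem stmt_2_general {ι : Type t} {α : Type t'} {β : Type*} [LinearOrder ι] [Nonempty α]
    [Preorder α] [IsDirectedOrder α] [NoMaxOrder α] [Nonempty M]
    (φ : L.Formula (β ⊕ β)) (b : α → β → M)
    (hchain : ∀ p q : α, p < q → φ.Realize (Sum.elim (b p) (b q))) :
    ∃ (N : Type (max t t' w)) (_ : L.Structure N) (_ : M ↪ₑ[L] N) (a : ι → β → N),
      (∀ i j : ι, i < j → φ.Realize (Sum.elim (a i) (a j))) ∧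
      ∀ e : ι ≃o ι, ∃ σ : N ≃[L] N, ∀ (i : ι) (m : β), σ (a i m) = a (e i) m := by
  let W : Ultrafilter (ι → α) := tensorPower ι (.of atTop)
  let term (i : ι) (m : β) : {F : (ι → α) → M // DependsOnFinitely F} :=
    ⟨fun x ↦ b (x i) m, (DependsOnFinitely.apply i).map fun p ↦ b p m⟩
  refine ⟨limitUltrapower L M W, inferInstance, limitUltrapower.diagonal L M W,
    fun i m ↦ limitUltrapower.mk W (term i m), fun i j hij ↦ ?_, fun e ↦ ?_⟩
  · rw [limitUltrapower.realize_sumElim_mk]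
    filter_upwards [eventually_tensorPower_lt _ (Ultrafilter.of_le atTop) hij] with x hx
    exact hchain _ _ hx
  · obtain ⟨σ, hσ⟩ := limitUltrapower.exists_equiv_reindex (L := L) (M := M) W e.toEquiv
      fun P hP ↦ eventually_tensorPower_reindex _ e.toOrderEmbedding hP
    exact ⟨σ, fun i m ↦ hσ (term i m)⟩

end ModelTheory

/-- Let `T` be an `L`-theory, `k ≥ 1`, and `φ(x,y)` an `L`-formula in two
`k`-tuples of free variables.  Suppose some model of `T` contains an `L`-indiscernible
sequence `(b_i)_{i<ω}` of `k`-tuples such that the relation defined by `φ` is transitive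
and irreflexive and `b_i < b_j` for all `i < j`.  Then there are a model `M₀` of `T`,
`k`-tuples `(a_i)_{i<ω}` in `M₀` with `a_i < a_j` (in the sense of `φ`) for all `i < j`,
and an `L`-automorphism `σ₀` of `M₀` with `σ₀(a_i) = a_{i+1}` componentwise. -/
theorem stmt_2 (L : FirstOrder.Language.{u, v}) (T : L.Theory)
    (k : ℕ) (hk : 1 ≤ k) (φ : L.Formula (Fin k ⊕ Fin k))
    (M : Type w) (_ : L.Structure M) (hM : M ⊨ T)
    (b : ℕ → Fin k → M)
    (hind : IsIndiscernibleSeq L M k b)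
    (htrans : Transitive (fun x y : Fin k → M => φ.Realize (Sum.elim x y)))
    (hirrefl : Irreflexive (fun x y : Fin k → M => φ.Realize (Sum.elim x y)))
    (hchain : ∀ i j : ℕ, i < j → φ.Realize (Sum.elim (b i) (b j))) :
    ∃ (M₀ : Type (max u v w)) (_ : L.Structure M₀),
      M₀ ⊨ T ∧
      ∃ (a : ℕ → Fin k → M₀) (σ₀ : M₀ ≃[L] M₀),
        (∀ i j : ℕ, i < j → φ.Realize (Sum.elim (a i) (a j))) ∧
        ∀ (i : ℕ) (m : Fin k), σ₀ (a i m) = a (i + 1) m := by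
  have : Nonempty M := ⟨b 0 ⟨0, hk⟩⟩
  obtain ⟨N, _, f, a, ha, hshift⟩ := stmt_2_general (ι := ULift.{max u v} ℤ) φ b hchain
  obtain ⟨σ, hσ⟩ := hshift
    (ULift.orderIso.trans ((OrderIso.addRight 1).trans ULift.orderIso.symm))
  exact ⟨N, inferInstance, (f.theory_model_iff T).1 hM, fun i ↦ a ⟨i⟩, σ,
    fun i j hij ↦ ha _ _ (Int.ofNat_lt.2 hij), fun i m ↦ hσ _ m⟩
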